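/- Let μ₁, μ₂ ∈ 𝒲_1(ℝ²). Then the following are equivalent: (i) μ₁ and μ₂ are supported on the same diagonal line L_{ε,a}; (ii) for every ν ∈ 𝒲_1(ℝ²) there exists η ∈ 𝒲_1(ℝ²) such that d_{W_1}(μ_i, η) = d_{W_1}(μ_i, ν) + d_{W_1}(ν, η) for i = 1,2, and d_{W_1}(ν, η) = 1. -/

import Mathlib

open MeasureTheory

/-- The `p`-Wasserstein distance between two measures, defined as the infimum over all
couplings `π` of `μ` and `ν` of `(∬ d(x,y)^p dπ)^(1/p)`. -/
noncomputable def Wdist {X : Type*} [MeasurableSpace X] [PseudoMetricSpace X] (p : ℝ)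
    (μ ν : Measure X) : ℝ :=
  (⨅ π ∈ {π : Measure (X × X) | π.map Prod.fst = μ ∧ π.map Prod.snd = ν},
    (∫⁻ q, edist q.1 q.2 ^ p ∂π) ^ (1 / p)).toReal

/-- The `p`-Wasserstein space over `X`: Borel probability measures on `X` with finite
`p`-th moment. -/
def WSet (X : Type*) [MeasurableSpace X] [PseudoMetricSpace X] (p : ℝ) : Set (Measure X) :=
  {μ | IsProbabilityMeasure μ ∧ ∃ x₀ : X, ∫⁻ x, edist x x₀ ^ p ∂μ < ⊤}

/-- An isometry of the underlying metric space: a distance-preserving bijection. -/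
def IsIsom {X : Type*} [PseudoMetricSpace X] (T : X → X) : Prop :=
  Function.Bijective T ∧ ∀ x y, dist (T x) (T y) = dist x y

/-- An isometry of the `p`-Wasserstein space over `X`: a bijection of the space of
probability measures with finite `p`-th moment preserving the Wasserstein distance. -/
def IsWIsometry (X : Type*) [MeasurableSpace X] [PseudoMetricSpace X] (p : ℝ)
    (Φ : Measure X → Measure X) : Prop :=
  Set.BijOn Φ (WSet X p) (WSet X p) ∧
    ∀ μ ∈ WSet X p, ∀ ν ∈ WSet X p, Wdist p (Φ μ) (Φ ν) = Wdist p μ ν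

/-- The (topological) support of a measure. -/
def msupport {X : Type*} [TopologicalSpace X] [MeasurableSpace X] (μ : Measure X) : Set X :=
  {x | ∀ U : Set X, IsOpen U → x ∈ U → μ U ≠ 0}

def diagLine (ε a : ℝ) : Set (ℝ × ℝ) := {z | z.2 = ε * z.1 + a}

def Lplus : Set (ℝ × ℝ) := {z | z.2 = z.1}

def Lminus : Set (ℝ × ℝ) := {z | z.2 = -z.1}

/-- The closed square `Q = [-1,1]²`. -/
abbrev Qs : Set (ℝ × ℝ) := Set.Icc (-1, -1) (1, 1)

def LplusQ : Set ↥Qs := {q | (q : ℝ × ℝ).2 = (q : ℝ × ℝ).1}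

def LminusQ : Set ↥Qs := {q | (q : ℝ × ℝ).2 = -(q : ℝ × ℝ).1}

/-!
In the coordinates `x.2 - x.1` and `x.2 + x.1` the maximum metric is half of the `ℓ¹` metric, and a
diagonal line `L` is a level set of one of them. Changing this coordinate by `2`, away from `L`,
moves every point by `1` and raises its distance to each point of `L` by exactly `1`. Hence it
raises the transport cost from any measure carried by `L` by `1`, because couplings can be pushed
along the injective move and pulled back; comparing distances to a single point of `L` shows that
`ν` itself is moved by exactly `1`.

Conversely, test (ii) on `ν = δ_y`. The product coupling of `μᵢ` and `η` costs at least
`d(μᵢ, η) = d(μᵢ, δ_y) + d(δ_y, η)`, which is the integral of `d(x, y) + d(y, z)` against it. So the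
triangle inequality is almost everywhere an equality, and some `z ≠ y` satisfies
`d(x, z) = d(x, y) + d(y, z)` for all `x` in both supports. In the `ℓ¹` metric this holds
coordinatewise, so if `x` and `x'` differ in both rotated coordinates and `y` is their midpoint,
only `z = y` is left. Thus any two points of the supports agree in one of the two rotated
coordinates, and then one of these is constant on both supports.
-/

open scoped ENNReal

section Coupling

variable {α β γ : Type*} [MeasurableSpace α] [MeasurableSpace β] [MeasurableSpace γ]
  {π : Measure (α × β)} {μ : Measure α} {ν : Measure β}

/-- Couplings of two measures: measures on the product with prescribed marginals. -/
structure IsCoupling (π : Measure (α × β)) (μ : Measure α) (ν : Measure β) : Prop where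
  fst_eq : π.fst = μ
  snd_eq : π.snd = ν

namespace IsCoupling

lemma prod (μ : Measure α) (ν : Measure β) [IsProbabilityMeasure μ] [IsProbabilityMeasure ν] :
    IsCoupling (μ.prod ν) μ ν :=
  ⟨Measure.fst_prod, Measure.snd_prod⟩

lemma graph (μ : Measure α) {f : α → β} (hf : Measurable f) :
    IsCoupling (μ.map fun x => (x, f x)) μ (μ.map f) :=
  ⟨(Measure.fst_map_prodMk hf).trans Measure.map_id, Measure.snd_map_prodMk measurable_id⟩

lemma swap (hπ : IsCoupling π μ ν) : IsCoupling (π.map Prod.swap) ν μ :=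
  ⟨Measure.fst_map_swap.trans hπ.snd_eq, Measure.snd_map_swap.trans hπ.fst_eq⟩

lemma map_right (hπ : IsCoupling π μ ν) {f : β → γ} (hf : Measurable f) :
    IsCoupling (π.map (Prod.map id f)) μ (ν.map f) where
  fst_eq := (Measure.fst_map_prodMk (hf.comp measurable_snd)).trans hπ.fst_eq
  snd_eq := by
    rw [← hπ.snd_eq, Measure.snd, Measure.snd, Measure.map_map hf measurable_snd]
    exact Measure.snd_map_prodMk measurable_fst

lemma isProbabilityMeasure [IsProbabilityMeasure μ] (hπ : IsCoupling π μ ν) :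
    IsProbabilityMeasure π :=
  ⟨by rw [← Measure.fst_univ, hπ.fst_eq, measure_univ]⟩

lemma lintegral_fst (hπ : IsCoupling π μ ν) {f : α → ℝ≥0∞} (hf : Measurable f) :
    ∫⁻ q, f q.1 ∂π = ∫⁻ x, f x ∂μ := by
  rw [← hπ.fst_eq, Measure.fst, lintegral_map hf measurable_fst]

lemma lintegral_snd (hπ : IsCoupling π μ ν) {f : β → ℝ≥0∞} (hf : Measurable f) :
    ∫⁻ q, f q.2 ∂π = ∫⁻ y, f y ∂ν := by
  rw [← hπ.snd_eq, Measure.snd, lintegral_map hf measurable_snd]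

lemma ae_fst (hπ : IsCoupling π μ ν) {p : α → Prop} (hp : ∀ᵐ x ∂μ, p x) : ∀ᵐ q ∂π, p q.1 :=
  ae_of_ae_map measurable_fst.aemeasurable (hπ.fst_eq.symm ▸ hp : ∀ᵐ x ∂π.fst, p x)

lemma ae_snd (hπ : IsCoupling π μ ν) {p : β → Prop} (hp : ∀ᵐ y ∂ν, p y) : ∀ᵐ q ∂π, p q.2 :=
  ae_of_ae_map measurable_snd.aemeasurable (hπ.snd_eq.symm ▸ hp : ∀ᵐ y ∂π.snd, p y)

lemma exists_eq_map_right [Nonempty β] {π : Measure (α × γ)} {f : β → γ}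
    (hf : MeasurableEmbedding f) (hπ : IsCoupling π μ (ν.map f)) :
    ∃ π' : Measure (α × β), IsCoupling π' μ ν ∧ π'.map (Prod.map id f) = π := by
  obtain ⟨g, hg, hgf⟩ := hf.exists_measurable_extend measurable_id fun _ => ‹Nonempty β›
  refine ⟨π.map (Prod.map id g), ?_, ?_⟩
  · simpa only [Measure.map_map hg hf.measurable, hgf, Measure.map_id] using hπ.map_right hg
  · have f_g : ∀ᵐ z ∂(ν.map f), f (g z) = z := by
      filter_upwards [ae_map_mem_range f hf.measurableSet_range ν]
      rintro _ ⟨y, rfl⟩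
      exact congrArg f (congrFun hgf y)
    have map_map_ae : Prod.map id f ∘ Prod.map id g =ᵐ[π] id := by
      filter_upwards [hπ.ae_snd f_g] with q hq
      exact Prod.ext rfl hq
    rw [Measure.map_map (measurable_id.prodMap hf.measurable) (measurable_id.prodMap hg),
      Measure.map_congr map_map_ae, Measure.map_id]

end IsCoupling

end Coupling

section TransportCost

variable {X : Type*} [MeasurableSpace X] [PseudoEMetricSpace X]
  {π : Measure (X × X)} {μ ν : Measure X} {c : ℝ≥0∞}

/-- The optimal transport cost for the cost function `edist`. It is the `1`-Wasserstein distance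
before the conversion to a real number, which would turn an infinite cost into `0`. -/
noncomputable def transportCost (μ ν : Measure X) : ℝ≥0∞ :=
  ⨅ (π : Measure (X × X)) (_ : IsCoupling π μ ν), ∫⁻ q, edist q.1 q.2 ∂π

lemma IsCoupling.transportCost_le (hπ : IsCoupling π μ ν) :
    transportCost μ ν ≤ ∫⁻ q, edist q.1 q.2 ∂π :=
  iInf₂_le π hπ

variable [OpensMeasurableSpace X]

lemma IsCoupling.lintegral_edist_add_edist (hπ : IsCoupling π μ ν) (y : X) :
    ∫⁻ q, (edist q.1 y + edist y q.2) ∂π = ∫⁻ x, edist x y ∂μ + ∫⁻ z, edist y z ∂ν := by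
  rw [lintegral_add_left (by fun_prop), hπ.lintegral_fst (f := (edist · y)) (by fun_prop),
    hπ.lintegral_snd (f := edist y) (by fun_prop)]

lemma IsCoupling.lintegral_edist_le (hπ : IsCoupling π μ ν) (y : X) :
    ∫⁻ q, edist q.1 q.2 ∂π ≤ ∫⁻ x, edist x y ∂μ + ∫⁻ z, edist y z ∂ν :=
  (lintegral_mono fun q : X × X => edist_triangle q.1 y q.2).trans_eq
    (hπ.lintegral_edist_add_edist y)

lemma lintegral_edist_le_add_transportCost (μ ν : Measure X) (y : X) :
    ∫⁻ z, edist y z ∂ν ≤ ∫⁻ x, edist y x ∂μ + transportCost μ ν := by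
  simp only [transportCost, ENNReal.add_iInf]
  refine le_iInf₂ fun π hπ => ?_
  calc ∫⁻ z, edist y z ∂ν = ∫⁻ q, edist y q.2 ∂π :=
        (hπ.lintegral_snd (f := edist y) (by fun_prop)).symm
    _ ≤ ∫⁻ q, (edist y q.1 + edist q.1 q.2) ∂π :=
        lintegral_mono fun q => edist_triangle y q.1 q.2
    _ = ∫⁻ x, edist y x ∂μ + ∫⁻ q, edist q.1 q.2 ∂π := by
        rw [lintegral_add_left (by fun_prop), hπ.lintegral_fst (f := edist y) (by fun_prop)]

lemma transportCost_dirac_left (y : X) (ν : Measure X) [IsProbabilityMeasure ν] :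
    transportCost (Measure.dirac y) ν = ∫⁻ z, edist y z ∂ν := by
  have h_dirac : ∫⁻ x, edist y x ∂(Measure.dirac y) = 0 := by
    rw [lintegral_dirac' y (by fun_prop), edist_self]
  apply le_antisymm
  · refine (IsCoupling.prod (Measure.dirac y) ν).transportCost_le.trans ?_
    refine ((IsCoupling.prod (Measure.dirac y) ν).lintegral_edist_le y).trans_eq ?_
    simp only [edist_comm _ y, h_dirac, zero_add]
  · simpa only [h_dirac, zero_add] using lintegral_edist_le_add_transportCost (Measure.dirac y) ν y

variable [SecondCountableTopology X]

lemma transportCost_comm (μ ν : Measure X) : transportCost μ ν = transportCost ν μ := by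
  suffices h : ∀ μ ν : Measure X, transportCost μ ν ≤ transportCost ν μ from
    le_antisymm (h μ ν) (h ν μ)
  refine fun μ ν => le_iInf₂ fun π hπ => hπ.swap.transportCost_le.trans_eq ?_
  rw [lintegral_map measurable_edist measurable_swap]
  simp only [Prod.fst_swap, Prod.snd_swap, edist_comm]

lemma transportCost_dirac_right (μ : Measure X) [IsProbabilityMeasure μ] (y : X) :
    transportCost μ (Measure.dirac y) = ∫⁻ x, edist x y ∂μ := by
  simp only [transportCost_comm μ, transportCost_dirac_left, edist_comm y]

lemma transportCost_map_self_le {T : X → X} (hT : Measurable T) (hTc : ∀ x, edist x (T x) ≤ c)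
    (ν : Measure X) [IsProbabilityMeasure ν] : transportCost ν (ν.map T) ≤ c := by
  refine (IsCoupling.graph ν hT).transportCost_le.trans ?_
  rw [lintegral_map measurable_edist (by fun_prop)]
  exact (lintegral_mono hTc).trans_eq (by rw [lintegral_const, measure_univ, mul_one])

lemma transportCost_map_right [IsProbabilityMeasure μ] {T : X → X} (hT : MeasurableEmbedding T)
    (hμT : ∀ᵐ x ∂μ, ∀ z, edist x (T z) = edist x z + c) (ν : Measure X) :
    transportCost μ (ν.map T) = transportCost μ ν + c := by
  have : Nonempty X := nonempty_of_isProbabilityMeasure μ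
  have cost_map : ∀ π, IsCoupling π μ ν →
      ∫⁻ q, edist q.1 q.2 ∂(π.map (Prod.map id T)) = ∫⁻ q, edist q.1 q.2 ∂π + c := by
    intro π hπ
    have := hπ.isProbabilityMeasure
    rw [lintegral_map measurable_edist (measurable_id.prodMap hT.measurable)]
    simp only [Prod.map_fst, Prod.map_snd, id]
    rw [lintegral_congr_ae ((hπ.ae_fst hμT).mono fun q hq => hq q.2),
      lintegral_add_right _ measurable_const, lintegral_const, measure_univ, mul_one]
  apply le_antisymm
  · simp only [transportCost, ENNReal.iInf_add]
    refine le_iInf₂ fun π hπ => ?_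
    exact (hπ.map_right hT.measurable).transportCost_le.trans_eq (cost_map π hπ)
  · refine le_iInf₂ fun π hπ => ?_
    obtain ⟨π', hπ', rfl⟩ := hπ.exists_eq_map_right hT
    rw [cost_map π' hπ']
    gcongr
    exact hπ'.transportCost_le

end TransportCost

section WassersteinSpace

variable {X : Type*} [MeasurableSpace X] [PseudoMetricSpace X] {μ ν η : Measure X} {c : ℝ≥0∞}

lemma Wdist_one_eq_toReal_transportCost (μ ν : Measure X) :
    Wdist 1 μ ν = (transportCost μ ν).toReal := by
  simp only [Wdist, ENNReal.rpow_one, div_one]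
  congr 1
  exact iInf_congr fun π => iInf_congr_Prop ⟨fun h => ⟨h.1, h.2⟩, fun h => ⟨h.1, h.2⟩⟩ fun _ => rfl

lemma lintegral_edist_ne_top_of_mem_WSet (hμ : μ ∈ WSet X 1) (y : X) :
    ∫⁻ x, edist x y ∂μ ≠ ∞ := by
  obtain ⟨_, x₀, hx₀⟩ := hμ
  simp only [ENNReal.rpow_one] at hx₀
  refine ne_top_of_le_ne_top ?_ (lintegral_mono fun x => edist_triangle x x₀ y)
  rw [lintegral_add_right _ measurable_const, lintegral_const, measure_univ, mul_one]
  exact ENNReal.add_ne_top.2 ⟨hx₀.ne, edist_ne_top x₀ y⟩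

variable [OpensMeasurableSpace X]

lemma dirac_mem_WSet (y : X) : Measure.dirac y ∈ WSet X 1 :=
  ⟨inferInstance, y, by
    simp only [ENNReal.rpow_one]
    rw [lintegral_dirac' y (by fun_prop), edist_self]
    exact ENNReal.zero_lt_top⟩

lemma lintegral_edist_prod_ne_top (hμ : μ ∈ WSet X 1) (hν : ν ∈ WSet X 1) :
    ∫⁻ q, edist q.1 q.2 ∂(μ.prod ν) ≠ ∞ := by
  have := hμ.1
  have := hν.1
  obtain ⟨y⟩ : Nonempty X := nonempty_of_isProbabilityMeasure μ
  refine ne_top_of_le_ne_top ?_ ((IsCoupling.prod μ ν).lintegral_edist_le y)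
  simp only [edist_comm y]
  exact ENNReal.add_ne_top.2
    ⟨lintegral_edist_ne_top_of_mem_WSet hμ y, lintegral_edist_ne_top_of_mem_WSet hν y⟩

lemma transportCost_ne_top (hμ : μ ∈ WSet X 1) (hν : ν ∈ WSet X 1) : transportCost μ ν ≠ ∞ :=
  have := hμ.1
  have := hν.1
  ne_top_of_le_ne_top (lintegral_edist_prod_ne_top hμ hν) (IsCoupling.prod μ ν).transportCost_le

lemma Wdist_one_eq_add_iff (hμ : μ ∈ WSet X 1) (hν : ν ∈ WSet X 1) (hη : η ∈ WSet X 1) :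
    Wdist 1 μ η = Wdist 1 μ ν + Wdist 1 ν η ↔
      transportCost μ η = transportCost μ ν + transportCost ν η := by
  have hμν := transportCost_ne_top hμ hν
  have hνη := transportCost_ne_top hν hη
  simp only [Wdist_one_eq_toReal_transportCost]
  rw [← ENNReal.toReal_add hμν hνη, ENNReal.toReal_eq_toReal_iff' (transportCost_ne_top hμ hη)
    (ENNReal.add_ne_top.2 ⟨hμν, hνη⟩)]

variable [SecondCountableTopology X]

lemma map_mem_WSet {T : X → X} (hT : Measurable T) (hTc : ∀ x, edist x (T x) ≤ c) (hc : c ≠ ∞)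
    (hν : ν ∈ WSet X 1) : ν.map T ∈ WSet X 1 := by
  have := hν.1
  obtain ⟨y⟩ : Nonempty X := nonempty_of_isProbabilityMeasure ν
  refine ⟨Measure.isProbabilityMeasure_map hT.aemeasurable, y, ?_⟩
  simp only [ENNReal.rpow_one, edist_comm _ y]
  refine (lintegral_edist_le_add_transportCost ν (ν.map T) y).trans_lt ?_
  refine ENNReal.add_lt_top.2 ⟨?_, ?_⟩
  · simpa only [edist_comm y] using (lintegral_edist_ne_top_of_mem_WSet hν y).lt_top
  · exact (transportCost_map_self_le hT hTc ν).trans_lt hc.lt_top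

lemma transportCost_map_self_eq {T : X → X} (hT : Measurable T) (hTc : ∀ x, edist x (T x) ≤ c)
    {p : X} (hp : ∀ z, edist p (T z) = edist p z + c) (hν : ν ∈ WSet X 1) :
    transportCost ν (ν.map T) = c := by
  have := hν.1
  refine le_antisymm (transportCost_map_self_le hT hTc ν) ?_
  have moment_map : ∫⁻ z, edist p z ∂(ν.map T) = ∫⁻ x, edist p x ∂ν + c := by
    rw [lintegral_map (by fun_prop) hT]
    simp only [hp]
    rw [lintegral_add_right _ measurable_const, lintegral_const, measure_univ, mul_one]
  have moment_ne_top : ∫⁻ x, edist p x ∂ν ≠ ∞ := by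
    simpa only [edist_comm p] using lintegral_edist_ne_top_of_mem_WSet hν p
  refine (ENNReal.add_le_add_iff_left moment_ne_top).1 ?_
  exact moment_map ▸ lintegral_edist_le_add_transportCost ν (ν.map T) p

end WassersteinSpace

section Support

lemma msupport_eq_support {X : Type*} [TopologicalSpace X] [MeasurableSpace X] (μ : Measure X) :
    msupport μ = μ.support := by
  rw [Measure.support_eq_forall_isOpen]
  simp only [msupport, pos_iff_ne_zero]
  exact Set.ext fun x => forall_congr' fun U => forall_comm

lemma ae_forall_mem_support_of_ae_prod {α β : Type*} [TopologicalSpace α] [MeasurableSpace α]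
    [MeasurableSpace β] {μ : Measure α} [SFinite μ] {ν : Measure β} [SFinite ν] {p : α → β → Prop}
    (hp : ∀ b, IsClosed {a | p a b}) (h : ∀ᵐ q ∂(μ.prod ν), p q.1 q.2) :
    ∀ᵐ b ∂ν, ∀ a ∈ μ.support, p a b := by
  have h_swap : ∀ᵐ q ∂(ν.prod μ), p q.2 q.1 := by
    rw [← Measure.prod_swap] at h
    exact ae_of_ae_map measurable_swap.aemeasurable h
  filter_upwards [Measure.ae_ae_of_ae_prod h_swap] with b hb
  exact Measure.support_subset_of_isClosed (hp b) hb

lemma edist_eq_edist_add_edist_iff {X : Type*} [PseudoMetricSpace X] {x y z : X} :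
    edist x z = edist x y + edist y z ↔ dist x z = dist x y + dist y z := by
  simp only [edist_dist, ← ENNReal.ofReal_add dist_nonneg dist_nonneg]
  exact ENNReal.ofReal_eq_ofReal_iff dist_nonneg (add_nonneg dist_nonneg dist_nonneg)

lemma frequently_ne_of_Wdist_dirac_ne_zero {X : Type*} [MeasurableSpace X] [PseudoMetricSpace X]
    [OpensMeasurableSpace X] {η : Measure X} [IsProbabilityMeasure η] {y : X}
    (h : Wdist 1 (Measure.dirac y) η ≠ 0) : ∃ᶠ z in ae η, z ≠ y := by
  contrapose! h
  rw [Wdist_one_eq_toReal_transportCost, transportCost_dirac_left]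
  have h_zero : ∀ᵐ z ∂η, edist y z = 0 := by
    filter_upwards [h] with z hz
    rw [hz, edist_self]
  rw [lintegral_congr_ae h_zero, lintegral_zero, ENNReal.toReal_zero]

lemma ae_forall_mem_msupport_dist_eq_add {X : Type*} [MeasurableSpace X] [PseudoMetricSpace X]
    [OpensMeasurableSpace X] [SecondCountableTopology X] {μ η : Measure X} (hμ : μ ∈ WSet X 1)
    (hη : η ∈ WSet X 1) {y : X}
    (h : Wdist 1 μ η = Wdist 1 μ (Measure.dirac y) + Wdist 1 (Measure.dirac y) η) :
    ∀ᵐ z ∂η, ∀ x ∈ msupport μ, dist x z = dist x y + dist y z := by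
  have := hμ.1
  have := hη.1
  rw [Wdist_one_eq_add_iff hμ (dirac_mem_WSet y) hη] at h
  simp only [msupport_eq_support, ← edist_eq_edist_add_edist_iff]
  refine ae_forall_mem_support_of_ae_prod (fun z => isClosed_eq (by fun_prop) (by fun_prop)) ?_
  refine ae_eq_of_ae_le_of_lintegral_le (.of_forall fun q => edist_triangle q.1 y q.2)
    (lintegral_edist_prod_ne_top hμ hη) (by fun_prop) ?_
  calc ∫⁻ q, (edist q.1 y + edist y q.2) ∂(μ.prod η)
      = ∫⁻ x, edist x y ∂μ + ∫⁻ z, edist y z ∂η := (IsCoupling.prod μ η).lintegral_edist_add_edist y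
    _ = transportCost μ η := by rw [h, transportCost_dirac_right, transportCost_dirac_left]
    _ ≤ ∫⁻ q, edist q.1 q.2 ∂(μ.prod η) := (IsCoupling.prod μ η).transportCost_le

end Support

section DiagonalLines

/-- The rotated coordinate of the plane whose level sets are the diagonal lines of slope `ε`. -/
def diagCoord (ε : ℝ) (x : ℝ × ℝ) : ℝ := x.2 - ε * x.1

variable {ε a r : ℝ} {x x' y z : ℝ × ℝ}

lemma mem_diagLine_iff : x ∈ diagLine ε a ↔ diagCoord ε x = a :=
  sub_eq_iff_eq_add'.symm

lemma max_abs_eq_abs_add_abs_half (s t : ℝ) : max |s| |t| = (|t - s| + |t + s|) / 2 := by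
  grind

lemma dist_eq_diagCoord (hε : ε = 1 ∨ ε = -1) (x y : ℝ × ℝ) :
    dist x y = (|diagCoord ε x - diagCoord ε y| + |diagCoord (-ε) x - diagCoord (-ε) y|) / 2 := by
  rw [Prod.dist_eq, Real.dist_eq, Real.dist_eq, max_abs_eq_abs_add_abs_half]
  simp only [diagCoord]
  rcases hε with rfl | rfl <;> ring_nf

lemma measurable_diagCoord (ε : ℝ) : Measurable (diagCoord ε) := by
  unfold diagCoord
  fun_prop

/-- The displacement of the plane by distance `r` away from the diagonal line `diagLine ε a`,
perpendicularly to it. The points of the line itself move upwards. -/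
noncomputable def awayFromDiagLine (ε a r : ℝ) (x : ℝ × ℝ) : ℝ × ℝ :=
  if a ≤ diagCoord ε x then x + r • (-ε, 1) else x - r • (-ε, 1)

lemma measurable_awayFromDiagLine (ε a r : ℝ) : Measurable (awayFromDiagLine ε a r) :=
  Measurable.ite (measurableSet_le measurable_const (measurable_diagCoord ε))
    (by fun_prop) (by fun_prop)

lemma diagCoord_awayFromDiagLine (hε : ε = 1 ∨ ε = -1) (a r : ℝ) (x : ℝ × ℝ) :
    diagCoord ε (awayFromDiagLine ε a r x) =
      if a ≤ diagCoord ε x then diagCoord ε x + 2 * r else diagCoord ε x - 2 * r := by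
  unfold awayFromDiagLine
  split_ifs <;> rcases hε with rfl | rfl <;>
    simp only [diagCoord, Prod.fst_add, Prod.snd_add, Prod.fst_sub, Prod.snd_sub, Prod.smul_mk,
      smul_eq_mul] <;> ring

lemma diagCoord_neg_awayFromDiagLine (hε : ε = 1 ∨ ε = -1) (a r : ℝ) (x : ℝ × ℝ) :
    diagCoord (-ε) (awayFromDiagLine ε a r x) = diagCoord (-ε) x := by
  unfold awayFromDiagLine
  split_ifs <;> rcases hε with rfl | rfl <;>
    simp only [diagCoord, Prod.fst_add, Prod.snd_add, Prod.fst_sub, Prod.snd_sub, Prod.smul_mk,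
      smul_eq_mul] <;> ring

lemma dist_awayFromDiagLine_self (hε : ε = 1 ∨ ε = -1) (a : ℝ) (hr : 0 ≤ r) (x : ℝ × ℝ) :
    dist x (awayFromDiagLine ε a r x) = r := by
  rw [dist_eq_diagCoord hε, diagCoord_awayFromDiagLine hε, diagCoord_neg_awayFromDiagLine hε]
  grind

lemma dist_awayFromDiagLine (hε : ε = 1 ∨ ε = -1) (hr : 0 ≤ r) (hx : x ∈ diagLine ε a)
    (z : ℝ × ℝ) : dist x (awayFromDiagLine ε a r z) = dist x z + r := by
  rw [mem_diagLine_iff] at hx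
  simp only [dist_eq_diagCoord hε, diagCoord_awayFromDiagLine hε,
    diagCoord_neg_awayFromDiagLine hε, hx]
  grind

lemma edist_awayFromDiagLine_self (hε : ε = 1 ∨ ε = -1) (a : ℝ) (hr : 0 ≤ r) (x : ℝ × ℝ) :
    edist x (awayFromDiagLine ε a r x) = ENNReal.ofReal r := by
  rw [edist_dist, dist_awayFromDiagLine_self hε a hr]

lemma edist_awayFromDiagLine (hε : ε = 1 ∨ ε = -1) (hr : 0 ≤ r) (hx : x ∈ diagLine ε a)
    (z : ℝ × ℝ) : edist x (awayFromDiagLine ε a r z) = edist x z + ENNReal.ofReal r := by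
  rw [edist_dist, dist_awayFromDiagLine hε hr hx, ENNReal.ofReal_add dist_nonneg hr, edist_dist]

lemma awayFromDiagLine_injective (hε : ε = 1 ∨ ε = -1) (a : ℝ) (hr : 0 ≤ r) :
    Function.Injective (awayFromDiagLine ε a r) := by
  intro x y hxy
  have h := congrArg (diagCoord ε) hxy
  have h' := congrArg (diagCoord (-ε)) hxy
  rw [diagCoord_awayFromDiagLine hε, diagCoord_awayFromDiagLine hε] at h
  rw [diagCoord_neg_awayFromDiagLine hε, diagCoord_neg_awayFromDiagLine hε] at h'
  rw [← dist_eq_zero, dist_eq_diagCoord hε]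
  grind

lemma measurableEmbedding_awayFromDiagLine (hε : ε = 1 ∨ ε = -1) (a : ℝ) (hr : 0 ≤ r) :
    MeasurableEmbedding (awayFromDiagLine ε a r) :=
  (measurable_awayFromDiagLine ε a r).measurableEmbedding (awayFromDiagLine_injective hε a hr)

lemma map_awayFromDiagLine_mem_WSet (hε : ε = 1 ∨ ε = -1) (a : ℝ) (hr : 0 ≤ r)
    {ν : Measure (ℝ × ℝ)} (hν : ν ∈ WSet (ℝ × ℝ) 1) :
    ν.map (awayFromDiagLine ε a r) ∈ WSet (ℝ × ℝ) 1 :=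
  map_mem_WSet (measurable_awayFromDiagLine ε a r)
    (fun x => (edist_awayFromDiagLine_self hε a hr x).le) ENNReal.ofReal_ne_top hν

lemma transportCost_map_awayFromDiagLine_self (hε : ε = 1 ∨ ε = -1) (a : ℝ) (hr : 0 ≤ r)
    {ν : Measure (ℝ × ℝ)} (hν : ν ∈ WSet (ℝ × ℝ) 1) :
    transportCost ν (ν.map (awayFromDiagLine ε a r)) = ENNReal.ofReal r := by
  have mem_line : ((0, a) : ℝ × ℝ) ∈ diagLine ε a := by simp [diagLine]
  exact transportCost_map_self_eq (measurable_awayFromDiagLine ε a r)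
    (fun x => (edist_awayFromDiagLine_self hε a hr x).le) (edist_awayFromDiagLine hε hr mem_line) hν

lemma transportCost_map_awayFromDiagLine {μ : Measure (ℝ × ℝ)} [IsProbabilityMeasure μ]
    (hε : ε = 1 ∨ ε = -1) (hr : 0 ≤ r) (hμ : msupport μ ⊆ diagLine ε a) (ν : Measure (ℝ × ℝ)) :
    transportCost μ (ν.map (awayFromDiagLine ε a r)) = transportCost μ ν + ENNReal.ofReal r := by
  refine transportCost_map_right (measurableEmbedding_awayFromDiagLine hε a hr) ?_ ν
  rw [msupport_eq_support] at hμ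
  filter_upwards [Measure.support_mem_ae (μ := μ)] with x hx
  exact edist_awayFromDiagLine hε hr (hμ hx)

lemma eq_half_add_of_abs_sub_eq_add {s t m u : ℝ} (hst : s ≠ t) (hm : m = (s + t) / 2)
    (hs : |s - u| = |s - m| + |m - u|) (ht : |t - u| = |t - m| + |m - u|) : u = m := by
  grind

lemma abs_diagCoord_sub_eq_add (hε : ε = 1 ∨ ε = -1) (h : dist x z = dist x y + dist y z) :
    |diagCoord ε x - diagCoord ε z| =
      |diagCoord ε x - diagCoord ε y| + |diagCoord ε y - diagCoord ε z| := by
  simp only [dist_eq_diagCoord hε] at h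
  have := abs_sub_le (diagCoord ε x) (diagCoord ε y) (diagCoord ε z)
  have := abs_sub_le (diagCoord (-ε) x) (diagCoord (-ε) y) (diagCoord (-ε) z)
  linarith

lemma diagCoord_midpoint (ε : ℝ) (x x' : ℝ × ℝ) :
    diagCoord ε (midpoint ℝ x x') = (diagCoord ε x + diagCoord ε x') / 2 := by
  simp only [diagCoord, midpoint_eq_smul_add, Prod.snd_add, Prod.fst_add, Prod.smul_snd,
    Prod.smul_fst, smul_eq_mul, invOf_eq_inv]
  ring

lemma eq_midpoint_of_dist_eq_add (h₁ : diagCoord 1 x ≠ diagCoord 1 x')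
    (h₂ : diagCoord (-1) x ≠ diagCoord (-1) x')
    (hx : dist x z = dist x (midpoint ℝ x x') + dist (midpoint ℝ x x') z)
    (hx' : dist x' z = dist x' (midpoint ℝ x x') + dist (midpoint ℝ x x') z) :
    z = midpoint ℝ x x' := by
  have coord_eq : ∀ ε : ℝ, ε = 1 ∨ ε = -1 → diagCoord ε x ≠ diagCoord ε x' →
      diagCoord ε z = diagCoord ε (midpoint ℝ x x') := fun ε hε h =>
    eq_half_add_of_abs_sub_eq_add h (diagCoord_midpoint ε x x')
      (abs_diagCoord_sub_eq_add hε hx) (abs_diagCoord_sub_eq_add hε hx')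
  rw [← dist_eq_zero, dist_eq_diagCoord (.inl rfl), coord_eq 1 (.inl rfl) h₁,
    coord_eq (-1) (.inr rfl) h₂]
  simp

lemma exists_forall_eq_or_exists_forall_eq {α β γ : Type*} [Nonempty β] [Nonempty γ] {S : Set α}
    {f : α → β} {g : α → γ} (h : ∀ x ∈ S, ∀ y ∈ S, f x = f y ∨ g x = g y) :
    (∃ b, ∀ x ∈ S, f x = b) ∨ ∃ c, ∀ x ∈ S, g x = c := by
  rcases S.eq_empty_or_nonempty with rfl | ⟨x, hx⟩
  · simp
  · by_contra! hfg
    obtain ⟨y, hy, hfy⟩ := hfg.1 (f x)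
    obtain ⟨z, hz, hgz⟩ := hfg.2 (g x)
    have hgy : g y = g x := (h y hy x hx).resolve_left hfy
    have hfz : f z = f x := (h z hz x hx).resolve_right hgz
    rcases h y hy z hz with hf | hg
    · exact hfy (hf.trans hfz)
    · exact hgz (hg.symm.trans hgy)

lemma exists_subset_diagLine {S : Set (ℝ × ℝ)}
    (hS : ∀ y, ∃ z ≠ y, ∀ x ∈ S, dist x z = dist x y + dist y z) :
    ∃ ε a : ℝ, (ε = 1 ∨ ε = -1) ∧ S ⊆ diagLine ε a := by
  have coord_eq_or : ∀ x ∈ S, ∀ x' ∈ S,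
      diagCoord 1 x = diagCoord 1 x' ∨ diagCoord (-1) x = diagCoord (-1) x' := by
    intro x hx x' hx'
    by_contra! hne
    obtain ⟨z, hz, hSz⟩ := hS (midpoint ℝ x x')
    exact hz (eq_midpoint_of_dist_eq_add hne.1 hne.2 (hSz x hx) (hSz x' hx'))
  rcases exists_forall_eq_or_exists_forall_eq coord_eq_or with ⟨a, ha⟩ | ⟨a, ha⟩
  · exact ⟨1, a, .inl rfl, fun x hx => mem_diagLine_iff.2 (ha x hx)⟩
  · exact ⟨-1, a, .inr rfl, fun x hx => mem_diagLine_iff.2 (ha x hx)⟩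

end DiagonalLines

/-- Two measures `μ₁, μ₂ ∈ 𝒲₁(ℝ², d_m)` are supported on the same diagonal line if and
only if for every `ν` there exists an `η` at distance `1` from `ν` aligned with both
`(μ₁, ν)` and `(μ₂, ν)`. -/
theorem same_diag_line_support_characterization (μ₁ μ₂ : Measure (ℝ × ℝ))
    (hμ₁ : μ₁ ∈ WSet (ℝ × ℝ) 1) (hμ₂ : μ₂ ∈ WSet (ℝ × ℝ) 1) :
    (∃ ε a : ℝ, (ε = 1 ∨ ε = -1) ∧ msupport μ₁ ⊆ diagLine ε a ∧
      msupport μ₂ ⊆ diagLine ε a) ↔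
    (∀ ν ∈ WSet (ℝ × ℝ) 1, ∃ η ∈ WSet (ℝ × ℝ) 1,
      Wdist 1 μ₁ η = Wdist 1 μ₁ ν + Wdist 1 ν η ∧
      Wdist 1 μ₂ η = Wdist 1 μ₂ ν + Wdist 1 ν η ∧
      Wdist 1 ν η = 1) := by
  constructor
  · rintro ⟨ε, a, hε, h₁, h₂⟩ ν hν
    have hη := map_awayFromDiagLine_mem_WSet hε a zero_le_one hν
    have cost_eq := transportCost_map_awayFromDiagLine_self hε a zero_le_one hν
    have aligned : ∀ μ ∈ WSet (ℝ × ℝ) 1, msupport μ ⊆ diagLine ε a →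
        Wdist 1 μ (ν.map (awayFromDiagLine ε a 1)) =
          Wdist 1 μ ν + Wdist 1 ν (ν.map (awayFromDiagLine ε a 1)) := by
      intro μ hμ hμL
      have := hμ.1
      rw [Wdist_one_eq_add_iff hμ hν hη, cost_eq,
        transportCost_map_awayFromDiagLine hε zero_le_one hμL]
    exact ⟨_, hη, aligned μ₁ hμ₁ h₁, aligned μ₂ hμ₂ h₂,
      by rw [Wdist_one_eq_toReal_transportCost, cost_eq, ENNReal.toReal_ofReal zero_le_one]⟩
  · intro h
    obtain ⟨ε, a, hε, hS⟩ := exists_subset_diagLine (S := msupport μ₁ ∪ msupport μ₂) fun y => by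
      obtain ⟨η, hη, h₁, h₂, hyη⟩ := h _ (dirac_mem_WSet y)
      have := hη.1
      obtain ⟨z, hzy, hz₁, hz₂⟩ := ((frequently_ne_of_Wdist_dirac_ne_zero
        (hyη.trans_ne one_ne_zero)).and_eventually
        ((ae_forall_mem_msupport_dist_eq_add hμ₁ hη h₁).and
          (ae_forall_mem_msupport_dist_eq_add hμ₂ hη h₂))).exists
      exact ⟨z, hzy, fun x hx => hx.elim (hz₁ x) (hz₂ x)⟩
    exact ⟨ε, a, hε, Set.subset_union_left.trans hS, Set.subset_union_right.trans hS⟩
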